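/- arXiv:1804.10050 — 5 statements merged into one kernel-verified Lean document; each statement's English description precedes it below -/
import Mathlib

section
/- Let n ≥ 1 and let D_1,…,D_n be integers with D_i ≥ 3 for each i. Let H ⊆ ℤ_{D_1} × … × ℤ_{D_n} be a sunflower-free family. Then |H| ≤ 3·∑_{I ⊆ [n], 0 ≤ |I| ≤ 2n/3} ∏_{i∈I} (D_i − 1), where the sum is over all subsets I of {1,…,n} of size at most 2n/3 (and the empty product equals 1). -/
/-- Exactly two of `a`, `b`, `c` are equal. -/
def ExactlyTwoEq {β : Type*} (a b c : β) : Prop :=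
  (a = b ∧ a ≠ c) ∨ (a = c ∧ a ≠ b) ∨ (b = c ∧ a ≠ b)

/-- A family `H ⊆ ℤ_{D_1} × … × ℤ_{D_n}` is sunflower-free if for every three
distinct members there is a coordinate where exactly two of the entries agree. -/
def SunflowerFreePi (n : ℕ) (D : Fin n → ℕ) (H : Finset (∀ i, ZMod (D i))) : Prop :=
  ∀ x ∈ H, ∀ y ∈ H, ∀ z ∈ H, x ≠ y → y ≠ z → x ≠ z →
    ∃ i : Fin n, ExactlyTwoEq (x i) (y i) (z i)

/-!
Say that a function on the product has degree at most `d` if it is a combination of functions each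
depending on at most `d` coordinates. Let `d = ⌊2n/3⌋`, and let `V` be the space of restrictions to
the family `H` of the functions of degree at most `d`. A function of degree at most `d` is
determined by its values on a Hamming ball of radius `d`, so the dimension of `V` is at most the
size of such a ball, which is the sum in the bound.

The number of coinciding pairs among three values, minus one, is `2` if all three agree and `0` if
exactly two do. If `H` is sunflower-free, the product of these numbers over the coordinates is thus
`2 ^ n` times the diagonal tensor on `H × H × H`. Each factor is a sum of three terms, each of which
ignores one of the three points. After expanding, every summand has, by pigeonhole, a point ignored
in at least `n/3` coordinates, in which it therefore has degree at most `d`. So the diagonal tensor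
is annihilated by triples from the orthogonal complement `U` of `V`: `∑ x, u x * v x * w x = 0` for
all `u v w ∈ U`. Multiplying by an element of `U` of maximal support, which is injective on `U`,
then maps `U` into the orthogonal complement of `U`, that is, into `V`. Hence
`|H| = dim U + dim V ≤ 2 dim V`.
-/

open Finset Module

lemma exists_mem_forall_mul_eq_zero {R X : Type*} [Semiring R] [NoZeroDivisors R] [Finite X]
    (U : Submodule R (X → R)) : ∃ h ∈ U, ∀ u ∈ U, h * u = 0 → u = 0 := by
  obtain ⟨h, hU, hmax⟩ := Set.Finite.exists_maximalFor' Function.support (U : Set (X → R))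
    (Set.toFinite _) ⟨0, U.zero_mem⟩
  refine ⟨h, hU, fun u hu hmul ↦ funext fun x ↦ by_contra fun hx ↦ ?_⟩
  have h_eq_zero {y : X} (hy : u y ≠ 0) : h y = 0 :=
    (mul_eq_zero.1 (congrFun hmul y)).resolve_right hy
  have h_support_le : Function.support h ⊆ Function.support (h + u) := fun y hy ↦ by
    simpa [not_imp_comm.1 h_eq_zero hy] using hy
  have hx_mem : x ∈ Function.support (h + u) := by simpa [h_eq_zero hx] using hx
  exact hmax (U.add_mem hU hu) h_support_le hx_mem (h_eq_zero hx)

section DotOrthogonal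

variable {K X : Type*} [Fintype X]

section CommRing

variable [CommRing K]

/-- The orthogonal complement, with respect to the dot product, of a space of functions on a
finite type. No positivity is assumed, so the two spaces may intersect nontrivially. -/
def dotOrthogonal (V : Submodule K (X → K)) : Submodule K (X → K) :=
  LinearMap.BilinForm.orthogonal (dotProductBilin K K) V

lemma mem_dotOrthogonal {V : Submodule K (X → K)} {u : X → K} :
    u ∈ dotOrthogonal V ↔ ∀ v ∈ V, ∑ x, v x * u x = 0 :=
  Iff.rfl

lemma nondegenerate_dotProductBilin :
    LinearMap.BilinForm.Nondegenerate (dotProductBilin K K : LinearMap.BilinForm K (X → K)) :=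
  ⟨fun v hv ↦ dotProduct_eq_zero v hv,
    fun v hv ↦ dotProduct_eq_zero v fun w ↦ (dotProduct_comm v w).trans (hv w)⟩

lemma sum_prod_mul_eq_zero_of_mem_dotOrthogonal {r : ℕ} {V : Submodule K (X → K)}
    {u : Fin (r + 1) → X → K} {T : (Fin (r + 1) → X) → K} {k : Fin (r + 1)}
    (hu : u k ∈ dotOrthogonal V) (hT : ∀ w, (fun x ↦ T (k.insertNth x w)) ∈ V) :
    ∑ w, (∏ j, u j (w j)) * T w = 0 := by
  rw [← (Fin.insertNthEquiv (fun _ ↦ X) k).sum_comp, Fintype.sum_prod_type_right]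
  refine sum_eq_zero fun w _ ↦ ?_
  have h_slice := mem_dotOrthogonal.1 hu _ (hT w)
  calc _ = (∏ j, u (k.succAbove j) (w j)) * ∑ x, T (k.insertNth x w) * u k x := by
        rw [mul_sum]
        refine sum_congr rfl fun x _ ↦ ?_
        simp only [Fin.insertNthEquiv, Equiv.coe_fn_mk, Fin.prod_univ_succAbove _ k,
          Fin.insertNth_apply_same, Fin.insertNth_apply_succAbove]
        ring
    _ = 0 := by rw [h_slice, mul_zero]

end CommRing

section Field

variable [Field K]

lemma dotOrthogonal_dotOrthogonal (V : Submodule K (X → K)) :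
    dotOrthogonal (dotOrthogonal V) = V :=
  LinearMap.BilinForm.orthogonal_orthogonal nondegenerate_dotProductBilin
    (fun v w h ↦ (dotProduct_comm w v).trans h) V

lemma finrank_add_finrank_dotOrthogonal (V : Submodule K (X → K)) :
    finrank K V + finrank K (dotOrthogonal V) = Fintype.card X := by
  rw [dotOrthogonal, LinearMap.BilinForm.finrank_orthogonal nondegenerate_dotProductBilin,
    Nat.add_sub_cancel' V.finrank_le, finrank_fintype_fun_eq_card]

/-- Multiplication by an `h ∈ dotOrthogonal V` of maximal support embeds `dotOrthogonal V` into
its own orthogonal complement, which is `V`. -/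
lemma card_le_two_mul_finrank {V : Submodule K (X → K)}
    (hV : ∀ u : Fin 3 → X → K, (∀ k, u k ∈ dotOrthogonal V) → ∑ x, ∏ k, u k x = 0) :
    Fintype.card X ≤ 2 * finrank K V := by
  obtain ⟨h, hh, h_inj⟩ := exists_mem_forall_mul_eq_zero (dotOrthogonal V)
  have h_maps : ∀ u ∈ dotOrthogonal V, LinearMap.mulLeft K h u ∈ V := fun u hu ↦ by
    rw [← dotOrthogonal_dotOrthogonal V, mem_dotOrthogonal]
    intro v hv
    simpa [Fin.prod_univ_three, mul_assoc] using hV ![v, h, u] (by simp [Fin.forall_fin_succ, *])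
  have h_finrank_le : finrank K (dotOrthogonal V) ≤ finrank K V := by
    refine LinearMap.finrank_le_finrank_of_injective
      (f := (LinearMap.mulLeft K h).restrict h_maps) ?_
    refine (injective_iff_map_eq_zero _).2 fun u hu ↦ Subtype.ext ?_
    exact h_inj u u.2 (congrArg Subtype.val hu)
  have h_finrank_add := finrank_add_finrank_dotOrthogonal V
  lia

end Field

end DotOrthogonal

section Junta

variable {ι : Type*} {α : ι → Type*}

/-- The functions of degree at most `d` on a product type: the span of the `d`-juntas, that is, of
the functions that depend on at most `d` coordinates. -/
def juntaSpan (K : Type*) [Semiring K] (α : ι → Type*) (d : ℕ) :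
    Submodule K ((∀ i, α i) → K) :=
  Submodule.span K {f | ∃ I : Finset ι, #I ≤ d ∧ DependsOn f (I : Set ι)}

/-- The restrictions to the family `H` of the functions of degree at most `d`. -/
def juntaSpanOn (K : Type*) [Semiring K] (H : Finset (∀ i, α i)) (d : ℕ) :
    Submodule K (H → K) :=
  (juntaSpan K α d).map (LinearMap.funLeft K K Subtype.val)

variable {K : Type*}

lemma juntaSpanOn_mono [Semiring K] (H : Finset (∀ i, α i)) :
    Monotone (juntaSpanOn K H) := fun _ _ hde ↦
  Submodule.map_mono <| Submodule.span_mono fun _ ⟨I, hI, hf⟩ ↦ ⟨I, hI.trans hde, hf⟩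

lemma sum_powerset_neg_one_pow_smul_eq_zero_of_dependsOn {M : Type*} [DecidableEq ι]
    [AddCommGroup M] {f : (∀ i, α i) → M} {I S : Finset ι} (hf : DependsOn f (I : Set ι))
    (hS : ¬ S ⊆ I) (x o : ∀ i, α i) :
    ∑ J ∈ S.powerset, (-1 : ℤ) ^ #J • f (J.piecewise x o) = 0 := by
  obtain ⟨j, hjS, hjI⟩ := not_subset.1 hS
  rw [← insert_erase hjS, sum_powerset_insert (notMem_erase j S), ← sum_add_distrib]
  refine sum_eq_zero fun J hJ ↦ ?_
  have hjJ : j ∉ J := fun h ↦ notMem_erase j S (mem_powerset.1 hJ h)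
  have h_insert : f ((insert j J).piecewise x o) = f (J.piecewise x o) := hf fun i hi ↦ by
    rw [piecewise_insert, Function.update_of_ne (by rintro rfl; exact hjI hi)]
  rw [h_insert, card_insert_of_notMem hjJ, ← add_smul, pow_succ, mul_neg_one, add_neg_cancel,
    zero_smul]

lemma sum_powerset_neg_one_pow_smul_eq_zero_of_mem_juntaSpan [DecidableEq ι] [Ring K] {d : ℕ}
    {f : (∀ i, α i) → K} (hf : f ∈ juntaSpan K α d) {S : Finset ι} (hS : d < #S)
    (x o : ∀ i, α i) : ∑ J ∈ S.powerset, (-1 : ℤ) ^ #J • f (J.piecewise x o) = 0 := by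
  induction hf using Submodule.span_induction with
  | mem f hf =>
    obtain ⟨I, hI, hfI⟩ := hf
    exact sum_powerset_neg_one_pow_smul_eq_zero_of_dependsOn hfI
      (fun hSI ↦ (hS.trans_le (card_le_card hSI)).not_ge hI) x o
  | zero => simp
  | add f g _ _ hf hg => simp only [Pi.add_apply, smul_add, sum_add_distrib, hf, hg, add_zero]
  | smul c f _ hf =>
    simp only [Pi.smul_apply, smul_comm _ c, ← smul_sum, hf, smul_zero]

variable [Fintype ι]

lemma hammingDist_piecewise_left_le [DecidableEq ι] [∀ i, DecidableEq (α i)] (J : Finset ι)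
    (x o : ∀ i, α i) : hammingDist (J.piecewise x o) o ≤ #J :=
  card_le_card fun i hi ↦ by
    by_contra hiJ
    simp [hiJ] at hi

/-- Induct on the distance to `o`: beyond the ball, the alternating sum over the subsets of the
support expresses `f x` through values at points closer to `o`. -/
lemma eq_zero_of_mem_juntaSpan [∀ i, DecidableEq (α i)] [Ring K] {d : ℕ} {f : (∀ i, α i) → K}
    (hf : f ∈ juntaSpan K α d) {o : ∀ i, α i} (h_ball : ∀ x, hammingDist x o ≤ d → f x = 0) :
    f = 0 := by
  classical
  funext x
  induction hw : hammingDist x o using Nat.strong_induction_on generalizing x with | _ w ih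
  subst hw
  rcases le_or_gt (hammingDist x o) d with hx | hx
  · exact h_ball x hx
  let S : Finset ι := {i | x i ≠ o i}
  have h_piecewise : S.piecewise x o = x := by
    ext i
    by_cases hi : x i = o i <;> simp [S, Finset.piecewise, hi]
  have h_closer : ∀ J ∈ S.powerset, J ≠ S → (-1 : ℤ) ^ #J • f (J.piecewise x o) = 0 := by
    intro J hJ hJS
    have h_lt : hammingDist (J.piecewise x o) o < hammingDist x o :=
      (hammingDist_piecewise_left_le J x o).trans_lt
        (card_lt_card ((mem_powerset.1 hJ).ssubset_of_ne hJS))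
    rw [ih _ h_lt _ rfl, Pi.zero_apply, smul_zero]
  have h_sum := sum_powerset_neg_one_pow_smul_eq_zero_of_mem_juntaSpan hf (S := S) hx x o
  rw [sum_eq_single_of_mem S (mem_powerset_self S) h_closer, h_piecewise] at h_sum
  rcases neg_one_pow_eq_or ℤ #S with h | h <;> simpa [h] using h_sum

variable [∀ i, Fintype (α i)]

lemma card_filter_support_eq [DecidableEq ι] [∀ i, DecidableEq (α i)] (o : ∀ i, α i)
    (I : Finset ι) :
    #{x : ∀ i, α i | ({i | x i ≠ o i} : Finset ι) = I} = ∏ i ∈ I, (Fintype.card (α i) - 1) := by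
  have h_pi : ({x | ({i | x i ≠ o i} : Finset ι) = I} : Finset (∀ i, α i)) =
      Fintype.piFinset fun i ↦ if i ∈ I then {o i}ᶜ else {o i} := by
    ext x
    simp only [mem_filter_univ, Finset.ext_iff, Fintype.mem_piFinset]
    refine forall_congr' fun i ↦ ?_
    split_ifs with hi <;> simp [hi]
  simp [h_pi, Fintype.card_piFinset, apply_ite card, card_compl, prod_ite_mem]

lemma card_filter_hammingDist_le [DecidableEq ι] [∀ i, DecidableEq (α i)] (o : ∀ i, α i) (d : ℕ) :
    #{x | hammingDist x o ≤ d} = ∑ I : Finset ι with #I ≤ d, ∏ i ∈ I, (Fintype.card (α i) - 1) := by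
  rw [card_eq_sum_card_fiberwise (f := fun x ↦ ({i | x i ≠ o i} : Finset ι))
    (t := {I | #I ≤ d}) (by simp [Set.MapsTo, hammingDist])]
  refine sum_congr rfl fun I hI ↦ ?_
  rw [← card_filter_support_eq o I, filter_filter]
  refine congrArg card (filter_congr fun x _ ↦ and_iff_right_of_imp ?_)
  rintro rfl
  simpa [hammingDist] using hI

lemma finrank_juntaSpan_le [Ring K] [StrongRankCondition K] (o : ∀ i, α i) (d : ℕ) :
    finrank K (juntaSpan K α d) ≤
      ∑ I : Finset ι with #I ≤ d, ∏ i ∈ I, (Fintype.card (α i) - 1) := by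
  classical
  let restrictBall := LinearMap.funLeft K K
    (Subtype.val : {x : ∀ i, α i // hammingDist x o ≤ d} → ∀ i, α i)
  have h_inj : Function.Injective (restrictBall.domRestrict (juntaSpan K α d)) := by
    refine (injective_iff_map_eq_zero _).2 fun f hf ↦ Subtype.ext ?_
    exact eq_zero_of_mem_juntaSpan f.2 fun x hx ↦ congrFun hf ⟨x, hx⟩
  calc finrank K (juntaSpan K α d)
      ≤ finrank K ({x : ∀ i, α i // hammingDist x o ≤ d} → K) :=
        LinearMap.finrank_le_finrank_of_injective h_inj
    _ = _ := by
        rw [finrank_fintype_fun_eq_card, Fintype.card_subtype, card_filter_hammingDist_le]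

end Junta

section Tensor

variable {β : Type*} [DecidableEq β]

/-- The `k`-th of three summands of the tensor `(number of coinciding pairs in w) - 1`. It
compares the two entries other than `w k`, hence does not depend on `w k`; the constant is shared
equally among the summands. -/
def pairAgreement (k : Fin 3) (w : Fin 3 → β) : ℚ :=
  (if w (k + 1) = w (k + 2) then 1 else 0) - 1 / 3

lemma dependsOn_pairAgreement (k : Fin 3) :
    DependsOn (pairAgreement k : (Fin 3 → β) → ℚ) {k}ᶜ := by
  intro v w h
  have h_one : v (k + 1) = w (k + 1) := h _ (by simp)
  have h_two : v (k + 2) = w (k + 2) := h _ (by simp)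
  rw [pairAgreement, pairAgreement, h_one, h_two]

lemma sum_pairAgreement (w : Fin 3 → β) :
    ∑ k, pairAgreement k w = (if w 1 = w 2 then 1 else 0) + (if w 2 = w 0 then 1 else 0) +
      (if w 0 = w 1 then 1 else 0) - 1 := by
  rw [Fin.sum_univ_three]
  change ((if w 1 = w 2 then 1 else 0) - 1 / 3 : ℚ) + ((if w 2 = w 0 then 1 else 0) - 1 / 3) +
    ((if w 0 = w 1 then 1 else 0) - 1 / 3) = _
  ring

lemma sum_pairAgreement_const (b : β) : ∑ k, pairAgreement k (Function.const (Fin 3) b) = 2 := by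
  norm_num [pairAgreement]

lemma sum_pairAgreement_eq_zero {w : Fin 3 → β} (hw : ExactlyTwoEq (w 0) (w 1) (w 2)) :
    ∑ k, pairAgreement k w = 0 := by
  rw [sum_pairAgreement]
  rcases hw with ⟨h, h'⟩ | ⟨h, h'⟩ | ⟨h, h'⟩ <;> simp [← h, h', h'.symm]

end Tensor

lemma exists_mul_card_filter_ne_le {ι : Type*} [Fintype ι] {r : ℕ} (t : ι → Fin (r + 1)) :
    ∃ k, (r + 1) * #{i | t i ≠ k} ≤ r * Fintype.card ι := by
  have h_sum : ∑ k, #{i | t i ≠ k} = Fintype.card ι * r := by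
    simp only [card_filter]
    rw [sum_comm]
    simp only [← card_filter]
    simp [filter_ne]
  obtain ⟨k, -, hk⟩ := exists_le_of_sum_le (s := (univ : Finset (Fin (r + 1)))) univ_nonempty
    (f := fun k ↦ (r + 1) * #{i | t i ≠ k}) (g := fun _ ↦ r * Fintype.card ι)
    (by rw [← mul_sum, h_sum, sum_const, card_univ, Fintype.card_fin, smul_eq_mul, mul_comm r])
  exact ⟨k, hk⟩

section SunflowerFree

variable {ι : Type*} {α : ι → Type*} {H : Finset (∀ i, α i)}

/-- Sunflower-freeness of a family in an arbitrary product type, extending `SunflowerFreePi`. -/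
def SunflowerFree (H : Finset (∀ i, α i)) : Prop :=
  ∀ x ∈ H, ∀ y ∈ H, ∀ z ∈ H, x ≠ y → y ≠ z → x ≠ z →
    ∃ i, ExactlyTwoEq (x i) (y i) (z i)

lemma SunflowerFree.exists_exactlyTwoEq (hH : SunflowerFree H) {w : Fin 3 → H}
    (hw : w ∉ Set.range (Function.const (Fin 3))) :
    ∃ i, ExactlyTwoEq ((w 0).1 i) ((w 1).1 i) ((w 2).1 i) := by
  have h_ne : ∀ {j k}, w j ≠ w k → ∃ i, (w j).1 i ≠ (w k).1 i := fun h ↦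
    Function.ne_iff.1 (Subtype.coe_ne_coe.2 h)
  by_cases h01 : w 0 = w 1
  · have h02 : w 0 ≠ w 2 := fun h02 ↦
      hw ⟨w 0, funext fun k ↦ by fin_cases k <;> simp [← h01, ← h02]⟩
    obtain ⟨i, hi⟩ := h_ne h02
    exact ⟨i, Or.inl ⟨by rw [h01], hi⟩⟩
  by_cases h02 : w 0 = w 2
  · obtain ⟨i, hi⟩ := h_ne h01
    exact ⟨i, Or.inr (Or.inl ⟨by rw [h02], hi⟩)⟩
  by_cases h12 : w 1 = w 2
  · obtain ⟨i, hi⟩ := h_ne h01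
    exact ⟨i, Or.inr (Or.inr ⟨by rw [h12], hi⟩)⟩
  exact hH _ (w 0).2 _ (w 1).2 _ (w 2).2 (Subtype.coe_ne_coe.2 h01) (Subtype.coe_ne_coe.2 h12)
    (Subtype.coe_ne_coe.2 h02)

variable [Fintype ι]

lemma prod_pairAgreement_insertNth_mem_juntaSpanOn [∀ i, DecidableEq (α i)]
    (t : ι → Fin 3) (k : Fin 3) (w : Fin 2 → H) :
    (fun x : H ↦ ∏ i, pairAgreement (t i) fun j ↦ (k.insertNth x w : Fin 3 → H) j |>.1 i) ∈
      juntaSpanOn ℚ H #{i | t i ≠ k} := by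
  let f (x : ∀ i, α i) : ℚ := ∏ i, pairAgreement (t i) fun j ↦
    (k.insertNth x fun l ↦ (w l).1 : Fin 3 → ∀ i, α i) j i
  refine ⟨f, Submodule.subset_span ⟨({i | t i ≠ k} : Finset ι), le_rfl, fun x y hxy ↦ ?_⟩, ?_⟩
  · refine prod_congr rfl fun i _ ↦ dependsOn_pairAgreement (t i) fun j hj ↦ ?_
    rcases Fin.eq_self_or_eq_succAbove k j with rfl | ⟨l, rfl⟩
    · simpa using hxy i (by simpa using Ne.symm hj)
    · simp
  · funext x
    refine prod_congr rfl fun i _ ↦ congrArg _ (funext fun j ↦ ?_)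
    rcases Fin.eq_self_or_eq_succAbove k j with rfl | ⟨l, rfl⟩ <;> simp

lemma sum_prod_mul_prod_sum_pairAgreement_eq_zero [∀ i, DecidableEq (α i)] {u : Fin 3 → H → ℚ}
    (hu : ∀ k, u k ∈ dotOrthogonal (juntaSpanOn ℚ H (2 * Fintype.card ι / 3))) :
    ∑ w : Fin 3 → H, (∏ k, u k (w k)) * ∏ i, ∑ k, pairAgreement k (fun j ↦ (w j).1 i) = 0 := by
  classical
  simp only [Fintype.prod_sum, mul_sum]
  rw [sum_comm]
  refine sum_eq_zero fun t _ ↦ ?_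
  obtain ⟨k, hk⟩ := exists_mul_card_filter_ne_le t
  have h_degree : #{i | t i ≠ k} ≤ 2 * Fintype.card ι / 3 := by lia
  exact sum_prod_mul_eq_zero_of_mem_dotOrthogonal (hu k) fun w ↦
    juntaSpanOn_mono H h_degree (prod_pairAgreement_insertNth_mem_juntaSpanOn t k w)

lemma SunflowerFree.sum_prod_eq_zero (hH : SunflowerFree H) {u : Fin 3 → H → ℚ}
    (hu : ∀ k, u k ∈ dotOrthogonal (juntaSpanOn ℚ H (2 * Fintype.card ι / 3))) :
    ∑ x, ∏ k, u k x = 0 := by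
  classical
  have h_diagonal : ∑ x, (∏ k, u k x) * 2 ^ Fintype.card ι =
      ∑ w : Fin 3 → H, (∏ k, u k (w k)) * ∏ i, ∑ k, pairAgreement k (fun j ↦ (w j).1 i) := by
    refine Fintype.sum_of_injective (Function.const (Fin 3)) Function.const_injective _ _
      (fun w hw ↦ ?_) fun x ↦ ?_
    · obtain ⟨i, hi⟩ := hH.exists_exactlyTwoEq hw
      rw [prod_eq_zero (mem_univ i) (sum_pairAgreement_eq_zero hi), mul_zero]
    · have h_two (i : ι) : ∑ k, pairAgreement k (fun j ↦ (Function.const (Fin 3) x j).1 i) = 2 :=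
        sum_pairAgreement_const (x.1 i)
      rw [prod_congr rfl fun i _ ↦ h_two i, prod_const, card_univ]
      rfl
  rw [sum_prod_mul_prod_sum_pairAgreement_eq_zero hu, ← sum_mul] at h_diagonal
  exact (mul_eq_zero.1 h_diagonal).resolve_right (by positivity)

end SunflowerFree

theorem sunflowerFree_pi_bound_general {ι : Type*} [Fintype ι] {α : ι → Type*}
    [∀ i, Fintype (α i)] {H : Finset (∀ i, α i)} (hH : SunflowerFree H) :
    #H ≤ 2 * ∑ I : Finset ι with 3 * #I ≤ 2 * Fintype.card ι,
      ∏ i ∈ I, (Fintype.card (α i) - 1) := by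
  obtain rfl | ⟨o, -⟩ := H.eq_empty_or_nonempty
  · simp
  calc #H = Fintype.card H := (Fintype.card_coe H).symm
    _ ≤ 2 * finrank ℚ (juntaSpanOn ℚ H (2 * Fintype.card ι / 3)) :=
        card_le_two_mul_finrank fun _ ↦ hH.sum_prod_eq_zero
    _ ≤ 2 * finrank ℚ (juntaSpan ℚ α (2 * Fintype.card ι / 3)) := by
        gcongr
        exact Submodule.finrank_map_le _ _
    _ ≤ 2 * ∑ I : Finset ι with #I ≤ 2 * Fintype.card ι / 3,
          ∏ i ∈ I, (Fintype.card (α i) - 1) := by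
        gcongr
        exact finrank_juntaSpan_le o _
    _ = _ := by simp only [Nat.le_div_iff_mul_le three_pos, mul_comm _ 3]

theorem sunflowerFree_pi_bound (n : ℕ) (hn : 1 ≤ n) (D : Fin n → ℕ)
    (hD : ∀ i, 3 ≤ D i) (H : Finset (∀ i, ZMod (D i)))
    (hH : SunflowerFreePi n D H) :
    H.card ≤ 3 * ∑ I ∈ Finset.univ.powerset.filter
        (fun I : Finset (Fin n) => 3 * I.card ≤ 2 * n),
      ∏ i ∈ I, (D i - 1) := by
  have _ (i : Fin n) : NeZero (D i) := ⟨by have := hD i; lia⟩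
  have h_two := sunflowerFree_pi_bound_general (α := fun i ↦ ZMod (D i)) hH
  simp only [Fintype.card_fin, ZMod.card] at h_two
  exact h_two.trans (by rw [powerset_univ]; gcongr; simp)
end

section
/- Let D > 2 and n ≥ 1 be integers and let F ⊆ (ℤ_D)^n be a sunflower-free family. Then |F| ≤ c_D^n, where c_D = (3/2^{2/3})·(D−1)^{2/3}. -/
/-- A family `F ⊆ (ℤ_D)^n` is sunflower-free if for every three distinct members
there is a coordinate where exactly two of the three entries agree. -/
def SunflowerFreeZMod (D n : ℕ) (F : Finset (Fin n → ZMod D)) : Prop :=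
  ∀ x ∈ F, ∀ y ∈ F, ∀ z ∈ F, x ≠ y → y ≠ z → x ≠ z →
    ∃ i : Fin n, ExactlyTwoEq (x i) (y i) (z i)

open Finset Module

section Diagonal

variable {X Y K : Type*} [Field K]

theorem rank_add_le_of_col_mem_of_row_mem [Finite X] [Fintype Y]
    {V : Submodule K (X → K)} {W : Submodule K (Y → K)} {M N : Matrix X Y K}
    (hM : ∀ y, M.col y ∈ V) (hN : ∀ x, N.row x ∈ W) :
    (M + N).rank ≤ finrank K V + finrank K W := by
  have hrankM : M.rank ≤ finrank K V := by
    rw [M.rank_eq_finrank_span_cols]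
    exact Submodule.finrank_mono (Submodule.span_le.2 (Set.range_subset_iff.2 hM))
  have hrankN : N.rank ≤ finrank K W := by
    rw [N.rank_eq_finrank_span_row]
    exact Submodule.finrank_mono (Submodule.span_le.2 (Set.range_subset_iff.2 hN))
  calc (M + N).rank
      ≤ finrank K ↥(LinearMap.range M.mulVecLin ⊔ LinearMap.range N.mulVecLin) := by
        rw [Matrix.rank, Matrix.mulVecLin_add]
        exact Submodule.finrank_mono (LinearMap.range_add_le _ _)
    _ ≤ M.rank + N.rank := Submodule.finrank_add_le_finrank_add_finrank _ _
    _ ≤ finrank K V + finrank K W := add_le_add hrankM hrankN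

variable [Fintype X]

theorem exists_mem_finrank_le_card_support [DecidableEq K] (V : Submodule K (X → K)) :
    ∃ h ∈ V, finrank K V ≤ #{x | h x ≠ 0} := by
  obtain ⟨_, ⟨h, hV, rfl⟩, hmax⟩ := Set.exists_max_image
    {S : Finset X | ∃ h ∈ V, ({x | h x ≠ 0} : Finset X) = S} card (Set.toFinite _)
    ⟨_, 0, V.zero_mem, rfl⟩
  refine ⟨h, hV, ?_⟩
  by_contra! hlt
  let restrict : V →ₗ[K] ({x // h x ≠ 0} → K) := LinearMap.funLeft K K Subtype.val ∘ₗ V.subtype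
  obtain ⟨v, hv, hv₀⟩ := (Submodule.ne_bot_iff _).1 <|
    restrict.ker_ne_bot_of_finrank_lt (by simpa [Fintype.card_subtype] using hlt)
  have hvS (x : X) (hx : h x ≠ 0) : v.1 x = 0 := congrFun (LinearMap.mem_ker.1 hv) ⟨x, hx⟩
  obtain ⟨x₀, hx₀⟩ : ∃ x, v.1 x ≠ 0 := Function.ne_iff.1 (Subtype.coe_ne_coe.2 hv₀)
  have hhx₀ : h x₀ = 0 := not_imp_comm.1 (hvS x₀) hx₀
  have hss : ({x | h x ≠ 0} : Finset X) ⊂ ({x | (h + v.1) x ≠ 0} : Finset X) := by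
    refine ssubset_iff_of_subset (fun x hx => ?_) |>.2 ⟨x₀, by simp [hhx₀, hx₀], by simp [hhx₀]⟩
    have hhx : h x ≠ 0 := by simpa using hx
    simp [hvS x hhx, hhx]
  exact (card_lt_card hss).not_ge (hmax _ ⟨h + v.1, V.add_mem hV v.2, rfl⟩)

theorem exists_dotProduct_eq_zero_card_le [DecidableEq K] (V : Submodule K (X → K)) :
    ∃ h : X → K, (∀ v ∈ V, h ⬝ᵥ v = 0) ∧ Fintype.card X ≤ finrank K V + #{x | h x ≠ 0} := by
  classical
  obtain ⟨h, hV, hcard⟩ := exists_mem_finrank_le_card_support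
    (V.dualAnnihilator.comap (dotProductEquiv K X).toLinearMap)
  refine ⟨h, (Submodule.mem_dualAnnihilator _).1 hV, ?_⟩
  have hdim := Subspace.finrank_add_finrank_dualAnnihilator_eq V
  rw [finrank_fintype_fun_eq_card] at hdim
  rw [Submodule.comap_equiv_eq_map_symm, LinearEquiv.finrank_map_eq] at hcard
  omega

theorem card_le_finrank_add_of_diagonal {T A B C : X → X → X → K} {U V W : Submodule K (X → K)}
    (hT : ∀ x y z, T x y z = A x y z + B x y z + C x y z)
    (hA : ∀ y z, (fun x => A x y z) ∈ U) (hB : ∀ x z, (fun y => B x y z) ∈ V)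
    (hC : ∀ x y, (fun z => C x y z) ∈ W)
    (hdiag : ∀ x y z, T x y z ≠ 0 → x = y ∧ y = z) (hne : ∀ x, T x x x ≠ 0) :
    Fintype.card X ≤ finrank K U + finrank K V + finrank K W := by
  classical
  -- Contracting the third variable with `h` kills `C` and leaves a diagonal matrix.
  obtain ⟨h, hW, hcard⟩ := exists_dotProduct_eq_zero_card_le W
  let M : Matrix X X K := .of fun x y => ∑ z, h z * A x y z
  let N : Matrix X X K := .of fun x y => ∑ z, h z * B x y z
  have hsum : Matrix.diagonal (fun x => h x * T x x x) = M + N := by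
    ext x y
    have hcontract : ∑ z, h z * T x y z = (M + N) x y := by
      have hkill : ∑ z, h z * C x y z = 0 := hW _ (hC x y)
      simp only [hT, mul_add, sum_add_distrib, hkill, add_zero, Matrix.add_apply, M, N,
        Matrix.of_apply]
    rw [← hcontract]
    obtain rfl | hxy := eq_or_ne x y
    · rw [Matrix.diagonal_apply_eq, Fintype.sum_eq_single x fun z hz => ?_]
      exact mul_eq_zero_of_right _ (not_not.1 fun hTz => hz (hdiag x x z hTz).2.symm)
    · rw [Matrix.diagonal_apply_ne _ hxy, Fintype.sum_eq_zero _ fun z => ?_]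
      exact mul_eq_zero_of_right _ (not_not.1 fun hTz => hxy (hdiag x y z hTz).1)
  have hM (y : X) : M.col y ∈ U := by
    have : M.col y = ∑ z, h z • fun x => A x y z := by ext x; simp [M]
    exact this ▸ U.sum_mem fun z _ => U.smul_mem _ (hA y z)
  have hN (x : X) : N.row x ∈ V := by
    have : N.row x = ∑ z, h z • fun y => B x y z := by ext y; simp [N]
    exact this ▸ V.sum_mem fun z _ => V.smul_mem _ (hB x z)
  have hrank : #{x | h x ≠ 0} ≤ finrank K U + finrank K V := by
    simpa [← hsum, Matrix.rank_diagonal, hne, Fintype.card_subtype]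
      using rank_add_le_of_col_mem_of_row_mem hM hN
  omega

end Diagonal

section LowDegree

variable {ι : Type*} (R : Type*) (π : ι → Type*) [CommRing R]

/-- The functions of degree at most `k` on a product: the span of the functions that depend on at
most `k` coordinates. -/
def lowDegree (k : ℕ) : Submodule R ((∀ i, π i) → R) :=
  Submodule.span R {f | ∃ S : Finset ι, #S ≤ k ∧ DependsOn f S}

variable {R π}

theorem mem_lowDegree_of_dependsOn {f : (∀ i, π i) → R} {S : Finset ι} {k : ℕ} (hf : DependsOn f S)
    (hS : #S ≤ k) : f ∈ lowDegree R π k :=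
  Submodule.subset_span ⟨S, hS, hf⟩

theorem sum_powerset_piecewise_eq_zero_of_dependsOn [DecidableEq ι] {f : (∀ i, π i) → R}
    {S U : Finset ι} (hf : DependsOn f S) (hU : ¬ U ⊆ S) (x o : ∀ i, π i) :
    ∑ T ∈ U.powerset, (-1) ^ #T * f (T.piecewise x o) = 0 := by
  obtain ⟨i, hiU, hiS⟩ := not_subset.1 hU
  rw [← insert_erase hiU, sum_powerset_insert (notMem_erase i U), ← sum_add_distrib]
  refine sum_eq_zero fun T hT => ?_
  have hiT : i ∉ T := fun h => notMem_erase i U (mem_powerset.1 hT h)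
  have hfi : f ((insert i T).piecewise x o) = f (T.piecewise x o) := hf fun j hj => by
    have hji : j ≠ i := fun h => hiS (h ▸ hj)
    simp [Finset.piecewise, hji]
  rw [card_insert_of_notMem hiT, hfi]
  ring

theorem sum_powerset_piecewise_eq_zero [DecidableEq ι] {f : (∀ i, π i) → R} {k : ℕ}
    (hf : f ∈ lowDegree R π k) {U : Finset ι} (hU : k < #U) (x o : ∀ i, π i) :
    ∑ T ∈ U.powerset, (-1) ^ #T * f (T.piecewise x o) = 0 := by
  induction hf using Submodule.span_induction with
  | mem f hf =>
    obtain ⟨S, hS, hfS⟩ := hf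
    exact sum_powerset_piecewise_eq_zero_of_dependsOn hfS
      (fun h => (hS.trans_lt hU).not_ge (card_le_card h)) x o
  | zero => simp
  | add f g _ _ hf hg => simp [mul_add, sum_add_distrib, hf, hg]
  | smul c f _ hf => simp [mul_left_comm _ c, ← mul_sum, hf]

variable [Fintype ι] [∀ i, DecidableEq (π i)]

theorem hammingDist_piecewise_le_card [DecidableEq ι] (S : Finset ι) (x o : ∀ i, π i) :
    hammingDist (S.piecewise x o) o ≤ #S :=
  card_le_card fun i hi => by
    by_contra hiS
    simp [hiS] at hi

theorem eq_zero_of_mem_lowDegree {f : (∀ i, π i) → R} {k : ℕ} (hf : f ∈ lowDegree R π k)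
    (o : ∀ i, π i) (hball : ∀ x, hammingDist x o ≤ k → f x = 0) : f = 0 := by
  classical
  funext x
  induction hd : hammingDist x o using Nat.strong_induction_on generalizing x with
  | _ d ih =>
    obtain hle | hlt := le_or_gt (hammingDist x o) k
    · exact hball x hle
    set U : Finset ι := {i | x i ≠ o i} with hU
    have hx : U.piecewise x o = x := by
      ext i
      by_cases h : x i = o i <;> simp [hU, Finset.piecewise, h]
    -- All terms but `T = U` vanish, as the points `T.piecewise x o` are closer to `o` than `x`.
    have hsum := sum_powerset_piecewise_eq_zero hf (U := U) hlt x o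
    rw [sum_eq_single_of_mem U (mem_powerset_self U) fun T hT hTU => ?_, hx] at hsum
    · exact (isUnit_one.neg.pow _).mul_right_eq_zero.1 hsum
    · have hcard : #T < d := hd ▸ card_lt_card ((mem_powerset.1 hT).ssubset_of_ne hTU)
      simp [ih _ ((hammingDist_piecewise_le_card T x o).trans_lt hcard) _ rfl]

theorem finrank_lowDegree_le [DecidableEq ι] [Nontrivial R] [∀ i, Fintype (π i)] (k : ℕ)
    (o : ∀ i, π i) : finrank R (lowDegree R π k) ≤ #{x | hammingDist x o ≤ k} := by
  let restrict : lowDegree R π k →ₗ[R] ({x // hammingDist x o ≤ k} → R) :=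
    LinearMap.funLeft R R Subtype.val ∘ₗ (lowDegree R π k).subtype
  have hinj : Function.Injective restrict :=
    (injective_iff_map_eq_zero restrict).2 fun f hf =>
      Subtype.ext (eq_zero_of_mem_lowDegree f.2 o fun x hx => congrFun hf ⟨x, hx⟩)
  simpa [Fintype.card_subtype] using LinearMap.finrank_le_finrank_of_injective hinj

end LowDegree

section Expansion

variable {ι κ R : Type*} {π : ι → Type*} [Fintype ι] [Fintype κ] [DecidableEq κ]

theorem exists_mul_card_filter_ne_le_s9 [Nonempty κ] (s : ι → κ) :
    ∃ j, Fintype.card κ * #{i | s i ≠ j} ≤ (Fintype.card κ - 1) * Fintype.card ι := by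
  have hsum : ∑ j, #{i | s i ≠ j} = (Fintype.card κ - 1) * Fintype.card ι := by
    calc ∑ j, #{i | s i ≠ j} = ∑ i, #{j | s i ≠ j} := by
          simp_rw [card_filter]
          exact sum_comm
      _ = _ := by simp [filter_ne, card_erase_of_mem, mul_comm]
  obtain ⟨j, -, hj⟩ := exists_min_image univ (fun j => #{i | s i ≠ j}) univ_nonempty
  exact ⟨j, hsum ▸ card_nsmul_le_sum univ _ _ hj⟩

theorem exists_lowDegree_decomposition [Nonempty κ] [CommRing R]
    {g : ∀ i, κ → (κ → π i) → R} (hg : ∀ i j, DependsOn (g i j) {j}ᶜ) :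
    ∃ A : κ → (κ → ∀ i, π i) → R,
      (∀ x, ∏ i, ∑ j, g i j (fun l => x l i) = ∑ j, A j x) ∧
      ∀ j x, (fun v => A j (Function.update x j v)) ∈ lowDegree R π
        ((Fintype.card κ - 1) * Fintype.card ι / Fintype.card κ) := by
  classical
  -- `m s` is a variable ignored in at least a `1 / card κ` fraction of the factors `g i (s i)`.
  choose m hm using exists_mul_card_filter_ne_le_s9 (ι := ι) (κ := κ)
  refine ⟨fun j x => ∑ s with m s = j, ∏ i, g i (s i) (fun l => x l i), fun x => ?_, fun j x => ?_⟩
  · rw [prod_univ_sum, Fintype.piFinset_univ, sum_fiberwise]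
  · rw [← Finset.sum_fn]
    refine Submodule.sum_mem _ fun s hs => ?_
    obtain rfl : m s = j := (mem_filter.1 hs).2
    refine mem_lowDegree_of_dependsOn (S := {i | s i ≠ m s}) (fun v w hvw => ?_) ?_
    · refine prod_congr rfl fun i _ => hg i _ fun l hl => ?_
      obtain rfl | hlm := eq_or_ne l (m s)
      · simpa using hvw i (by simpa [eq_comm] using hl)
      · simp [hlm]
    · rw [Nat.le_div_iff_mul_le Fintype.card_pos, mul_comm]
      exact hm s

end Expansion

section CoincidenceKernel

variable {α : Type*} [DecidableEq α]

/-- The part of the number of coinciding pairs among `x 0`, `x 1`, `x 2`, minus one, that does not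
involve the variable `x j`; the constant `-1` is split evenly among the three parts. -/
def coincidenceKernel (j : Fin 3) (x : Fin 3 → α) : ℚ :=
  (if x (j + 1) = x (j + 2) then 1 else 0) - 1 / 3

theorem dependsOn_coincidenceKernel (j : Fin 3) :
    DependsOn (coincidenceKernel (α := α) j) {j}ᶜ := fun x y hxy => by
  have h₁ : j + 1 ≠ j := by fin_cases j <;> decide
  have h₂ : j + 2 ≠ j := by fin_cases j <;> decide
  rw [coincidenceKernel, coincidenceKernel, hxy _ h₁, hxy _ h₂]

theorem sum_coincidenceKernel_ne_zero_iff (x : Fin 3 → α) :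
    ∑ j, coincidenceKernel j x ≠ 0 ↔ ¬ ExactlyTwoEq (x 0) (x 1) (x 2) := by
  have hsum : ∑ j, coincidenceKernel j x = (if x 1 = x 2 then 1 else 0) +
      (if x 0 = x 2 then 1 else 0) + (if x 0 = x 1 then 1 else 0) - 1 := by
    simp only [Fin.sum_univ_three, coincidenceKernel, Fin.reduceAdd, eq_comm (a := x 2)]
    ring
  rw [hsum, ExactlyTwoEq]
  generalize x 0 = a, x 1 = b, x 2 = c
  split_ifs <;> norm_num <;> simp_all

end CoincidenceKernel

section Sunflower

variable {ι κ α : Type*}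

/-- The analogue of `SunflowerFreeZMod` over an arbitrary alphabet and index type. -/
def IsSunflowerFree (F : Finset (ι → α)) : Prop :=
  ∀ x ∈ F, ∀ y ∈ F, ∀ z ∈ F, x ≠ y → y ≠ z → x ≠ z → ∃ i, ExactlyTwoEq (x i) (y i) (z i)

namespace IsSunflowerFree

theorem eq_and_eq_of_forall_not_exactlyTwoEq {F : Finset (ι → α)} (hF : IsSunflowerFree F)
    {x y z : ι → α} (hx : x ∈ F) (hy : y ∈ F) (hz : z ∈ F)
    (h : ∀ i, ¬ ExactlyTwoEq (x i) (y i) (z i)) : x = y ∧ y = z := by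
  by_cases hxy : x = y
  · subst hxy
    exact ⟨rfl, funext fun i => by_contra fun hne => h i (.inl ⟨rfl, hne⟩)⟩
  by_cases hyz : y = z
  · subst hyz
    exact ⟨funext fun i => by_contra fun hne => h i (.inr (.inr ⟨rfl, hne⟩)), rfl⟩
  by_cases hxz : x = z
  · subst hxz
    exact absurd (funext fun i => by_contra fun hne => h i (.inr (.inl ⟨rfl, hne⟩))) hxy
  obtain ⟨i, hi⟩ := hF x hx y hy z hz hxy hyz hxz
  exact absurd hi (h i)

theorem map_piFinset [Fintype κ] [DecidableEq κ] {F : κ → Finset (ι → α)}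
    (hF : ∀ j, IsSunflowerFree (F j)) :
    IsSunflowerFree ((Fintype.piFinset F).map (Equiv.curry κ ι α).symm.toEmbedding) := by
  simp only [IsSunflowerFree, forall_mem_map, Fintype.mem_piFinset]
  intro x hx y hy z hz hxy _ _
  by_contra! hi
  have hxyz (j : κ) : x j = y j ∧ y j = z j :=
    (hF j).eq_and_eq_of_forall_not_exactlyTwoEq (hx j) (hy j) (hz j) fun i => hi (j, i)
  exact hxy (congrArg _ (funext fun j => (hxyz j).1))

variable [Fintype ι] [DecidableEq ι] [Fintype α] [DecidableEq α]

theorem card_le_three_mul_card_hammingBall {F : Finset (ι → α)} (hF : IsSunflowerFree F)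
    (o : ι → α) : #F ≤ 3 * #{x | hammingDist x o ≤ 2 * Fintype.card ι / 3} := by
  obtain ⟨A, hsum, hA⟩ := exists_lowDegree_decomposition (ι := ι)
    fun _ => dependsOn_coincidenceKernel (α := α)
  simp only [Fintype.card_fin, Nat.add_one_sub_one] at hA
  set V := lowDegree ℚ (fun _ : ι => α) (2 * Fintype.card ι / 3)
  let restrict : ((ι → α) → ℚ) →ₗ[ℚ] (F → ℚ) := LinearMap.funLeft ℚ ℚ Subtype.val
  have hrestrict (j : Fin 3) (x : Fin 3 → ι → α) {f : F → ℚ}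
      (hf : ∀ v : F, A j (Function.update x j v) = f v) : f ∈ V.map restrict :=
    ⟨_, hA j x, funext hf⟩
  have hne (x y z : ι → α) : ∑ j, A j ![x, y, z] ≠ 0 ↔ ∀ i, ¬ ExactlyTwoEq (x i) (y i) (z i) := by
    simp [← hsum, prod_ne_zero_iff, sum_coincidenceKernel_ne_zero_iff]
  have hcard : Fintype.card F ≤ _ := card_le_finrank_add_of_diagonal
    (T := fun x y z : F => ∑ j, A j ![x.1, y.1, z.1])
    (U := V.map restrict) (V := V.map restrict) (W := V.map restrict)
    (fun x y z => Fin.sum_univ_three _)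
    (fun y z => hrestrict 0 ![o, y, z] fun x =>
      congrArg (A 0) (by funext l; fin_cases l <;> rfl))
    (fun x z => hrestrict 1 ![x, o, z] fun y =>
      congrArg (A 1) (by funext l; fin_cases l <;> rfl))
    (fun x y => hrestrict 2 ![x, y, o] fun z =>
      congrArg (A 2) (by funext l; fin_cases l <;> rfl))
    (fun x y z h => (hF.eq_and_eq_of_forall_not_exactlyTwoEq x.2 y.2 z.2 ((hne _ _ _).1 h)).imp
      Subtype.ext Subtype.ext)
    (fun x => (hne _ _ _).2 fun i => by simp [ExactlyTwoEq])
  have hdim : finrank ℚ (V.map restrict) ≤ #{x | hammingDist x o ≤ 2 * Fintype.card ι / 3} :=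
    (Submodule.finrank_map_le _ _).trans (finrank_lowDegree_le _ o)
  rw [Fintype.card_coe] at hcard
  omega

end IsSunflowerFree

end Sunflower

section Counting

variable {ι α : Type*} [Fintype ι] [DecidableEq ι] [Fintype α] [DecidableEq α]

theorem sum_pow_hammingDist {R : Type*} [CommRing R] (t : R) (o : ι → α) :
    ∑ x, t ^ hammingDist x o = (1 + (Fintype.card α - 1) * t) ^ Fintype.card ι := by
  have hcoord (i : ι) : ∑ a, (if a = o i then 1 else t) = 1 + (Fintype.card α - 1) * t := by
    rw [← add_sum_erase _ _ (mem_univ (o i)), if_pos rfl,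
      sum_congr rfl fun a ha => if_neg (ne_of_mem_erase ha), sum_const, nsmul_eq_mul,
      cast_card_erase_of_mem (mem_univ _), card_univ]
  calc ∑ x, t ^ hammingDist x o
      = ∑ x : ι → α, ∏ i, if x i = o i then 1 else t :=
        sum_congr rfl fun x _ => by simp [prod_ite, hammingDist]
    _ = ∏ i, ∑ a, if a = o i then 1 else t := by
        rw [prod_univ_sum, Fintype.piFinset_univ]
    _ = _ := by simp [hcoord]

theorem card_hammingBall_mul_pow_le {R : Type*} [CommRing R] [LinearOrder R] [IsStrictOrderedRing R]
    {t : R} (ht₀ : 0 ≤ t) (ht₁ : t ≤ 1) (o : ι → α) (k : ℕ) :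
    #{x | hammingDist x o ≤ k} * t ^ k ≤ (1 + (Fintype.card α - 1) * t) ^ Fintype.card ι :=
  calc (#{x | hammingDist x o ≤ k} : R) * t ^ k
      = ∑ x with hammingDist x o ≤ k, t ^ k := by rw [sum_const, nsmul_eq_mul]
    _ ≤ ∑ x with hammingDist x o ≤ k, t ^ hammingDist x o :=
        sum_le_sum fun x hx => pow_le_pow_of_le_one ht₀ ht₁ (mem_filter.1 hx).2
    _ ≤ ∑ x, t ^ hammingDist x o :=
        sum_le_sum_of_subset_of_nonneg (filter_subset _ _) fun x _ _ => by positivity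
    _ = _ := sum_pow_hammingDist t o

theorem card_hammingBall_two_thirds_le (hα : 2 < Fintype.card α) (o : ι → α) :
    (#{x | hammingDist x o ≤ 2 * Fintype.card ι / 3} : ℝ) ≤
      ((3 / 2 ^ ((2 : ℝ) / 3)) * ((Fintype.card α : ℝ) - 1) ^ ((2 : ℝ) / 3)) ^ Fintype.card ι := by
  set n := Fintype.card ι
  set d : ℝ := (Fintype.card α : ℝ) - 1 with hd
  have hd₂ : 2 ≤ d := by
    have : (3 : ℝ) ≤ Fintype.card α := by exact_mod_cast hα
    linarith
  -- `t = 2 / d` minimises `(1 + d t) / t ^ (2 / 3)`.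
  have ht₀ : 0 < 2 / d := by positivity
  have ht₁ : 2 / d ≤ 1 := (div_le_one (by positivity)).2 hd₂
  have hexp : ((2 / d) ^ ((2 : ℝ) / 3)) ^ n ≤ (2 / d) ^ (2 * n / 3) := by
    rw [← Real.rpow_mul_natCast ht₀.le, ← Real.rpow_natCast]
    refine Real.rpow_le_rpow_of_exponent_ge ht₀ ht₁ (Nat.cast_div_le.trans_eq ?_)
    push_cast
    ring
  have hbase : 3 / 2 ^ ((2 : ℝ) / 3) * d ^ ((2 : ℝ) / 3) = 3 / (2 / d) ^ ((2 : ℝ) / 3) := by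
    rw [Real.div_rpow (by norm_num) (by positivity), div_div_eq_mul_div, div_mul_eq_mul_div]
  rw [hbase, div_pow, le_div_iff₀ (by positivity)]
  calc _ ≤ (#{x | hammingDist x o ≤ 2 * n / 3} : ℝ) * (2 / d) ^ (2 * n / 3) := by gcongr
    _ ≤ (1 + d * (2 / d)) ^ n := card_hammingBall_mul_pow_le ht₀.le ht₁ o _
    _ = 3 ^ n := by rw [mul_div_cancel₀ _ (by positivity)]; norm_num

end Counting

theorem le_of_forall_pow_le_mul_pow {K : Type*} [Field K] [LinearOrder K] [IsStrictOrderedRing K]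
    [Archimedean K] {a b C : K} (hb : 0 < b) (h : ∀ m : ℕ, a ^ m ≤ C * b ^ m) : a ≤ b := by
  by_contra! hlt
  obtain ⟨m, hm⟩ := pow_unbounded_of_one_lt C ((one_lt_div hb).2 hlt)
  rw [div_pow, lt_div_iff₀ (by positivity)] at hm
  exact (h m).not_gt hm

theorem naslund_sawin_zmod_bound_general {ι α : Type*} [Fintype ι] [Fintype α]
    (hα : 2 < Fintype.card α) {F : Finset (ι → α)} (hF : IsSunflowerFree F) :
    (#F : ℝ) ≤ ((3 / 2 ^ ((2 : ℝ) / 3)) * ((Fintype.card α : ℝ) - 1) ^ ((2 : ℝ) / 3)) ^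
      Fintype.card ι := by
  classical
  set c : ℝ := (3 / 2 ^ ((2 : ℝ) / 3)) * ((Fintype.card α : ℝ) - 1) ^ ((2 : ℝ) / 3)
  have hc : 0 < c := by
    have : (0 : ℝ) < Fintype.card α - 1 := sub_pos.2 (by exact_mod_cast (by omega))
    positivity
  obtain ⟨a⟩ : Nonempty α := Fintype.card_pos_iff.1 (by omega)
  refine le_of_forall_pow_le_mul_pow (C := 3) (by positivity) fun m => ?_
  have hpow := (IsSunflowerFree.map_piFinset fun _ : Fin m => hF).card_le_three_mul_card_hammingBall
    fun _ => a
  have hball := card_hammingBall_two_thirds_le hα fun _ : Fin m × ι => a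
  rw [card_map, Fintype.card_piFinset_const] at hpow
  calc (#F : ℝ) ^ m ≤ 3 * #{x | hammingDist x _ ≤ 2 * Fintype.card (Fin m × ι) / 3} := by
        exact_mod_cast hpow
    _ ≤ 3 * c ^ Fintype.card (Fin m × ι) := by gcongr
    _ = 3 * (c ^ Fintype.card ι) ^ m := by
        rw [Fintype.card_prod, Fintype.card_fin, mul_comm m, pow_mul]

theorem naslund_sawin_zmod_bound (D n : ℕ) (hD : 2 < D) (hn : 1 ≤ n)
    (F : Finset (Fin n → ZMod D)) (hF : SunflowerFreeZMod D n F) :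
    (F.card : ℝ) ≤ ((3 / 2 ^ ((2 : ℝ) / 3)) * ((D : ℝ) - 1) ^ ((2 : ℝ) / 3)) ^ n := by
  have : NeZero D := ⟨by omega⟩
  simpa using naslund_sawin_zmod_bound_general (α := ZMod D) (by simpa using hD) hF
end

section
/- Let X be a finite set, k ≥ 1, and K ⊆ binom(X, k) a k-uniform family of subsets of X. Then there exists a subfamily G ⊆ K and a partition X = X_1 ⊕ … ⊕ X_k into k disjoint parts such that |G ∩ X_i| = 1 for every G ∈ G and every 1 ≤ i ≤ k, and |G| ≥ (k!/k^k)·|K|. -/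
/-!
Colour the points independently and uniformly at random with `k` colours. A fixed `k`-set gets
`k` distinct colours with probability `k! / k ^ k`, so in some colouring at least that proportion
of `K` does; the colour classes of this colouring are the parts.
-/

open Finset Function

lemma exists_mul_card_le_card_filter {Ω ι : Type*} [Fintype Ω] [Nonempty Ω] (r : Ω → ι → Prop)
    [∀ ω, DecidablePred (r ω)] {p : ℚ≥0} {s : Finset ι} (hp : ∀ i ∈ s, p ≤ dens {ω | r ω i}) :
    ∃ ω, p * #s ≤ #{i ∈ s | r ω i} := by
  suffices ∑ _ω : Ω, p * #s ≤ ∑ ω : Ω, (#{i ∈ s | r ω i} : ℚ≥0) by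
    simpa using exists_le_of_sum_le univ_nonempty this
  calc ∑ _ω : Ω, p * #s
      = ∑ _i ∈ s, Fintype.card Ω * p := by
        simp only [sum_const, card_univ, nsmul_eq_mul]
        ring
    _ ≤ ∑ i ∈ s, Fintype.card Ω * dens {ω | r ω i} := by gcongr with i hi; exact hp i hi
    _ = ∑ i ∈ s, (#{ω | r ω i} : ℚ≥0) := by simp only [card_mul_dens]
    _ = ∑ ω : Ω, (#{i ∈ s | r ω i} : ℚ≥0) :=
        mod_cast (sum_card_bipartiteAbove_eq_sum_card_bipartiteBelow r).symm

lemma injOn_extend_image_iff {α β γ : Type*} {f : β → α} (hf : Injective f) (c : β → γ)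
    (d : α → γ) (s : Set β) : Set.InjOn (extend f c d) (f '' s) ↔ Set.InjOn c s := by
  rw [← hf.injOn.comp_iff, extend_comp hf]

section Coloring

variable {α β γ : Type*} [Fintype γ] [DecidableEq γ]

lemma card_filter_injOn [Fintype β] [DecidableEq β] (s : Finset β) :
    #{c : β → γ | Set.InjOn c s} =
      (Fintype.card γ).descFactorial #s * Fintype.card γ ^ #sᶜ := by
  let restrictEquiv : {c : β → γ // Set.InjOn c s} ≃
      {f : {x // x ∈ s} → γ // Injective f} × ({x // x ∉ s} → γ) :=
    ((Equiv.piEquivPiSubtypeProd (· ∈ s) fun _ ↦ γ).subtypeEquiv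
      (q := fun f ↦ Injective f.1) fun _ ↦ Set.injOn_iff_injective).trans
      (Equiv.prodSubtypeFstEquivSubtypeProd (p := fun f : {x // x ∈ s} → γ ↦ Injective f))
  calc #{c : β → γ | Set.InjOn c s}
      = Fintype.card (({x // x ∈ s} ↪ γ) × ({x // x ∉ s} → γ)) := by
        rw [← Fintype.card_subtype]
        exact Fintype.card_congr (restrictEquiv.trans
          ((Equiv.subtypeInjectiveEquivEmbedding _ _).prodCongr (Equiv.refl _)))
    _ = (Fintype.card γ).descFactorial #s * Fintype.card γ ^ #sᶜ := by
        rw [Fintype.card_prod, Fintype.card_embedding_eq, Fintype.card_fun, Fintype.card_coe,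
          Fintype.card_subtype_compl, Fintype.card_coe, card_compl]

lemma dens_filter_injOn [Fintype β] [DecidableEq β] [Nonempty γ] (s : Finset β) :
    dens {c : β → γ | Set.InjOn c s} =
      ((Fintype.card γ).descFactorial #s : ℚ≥0) / Fintype.card γ ^ #s := by
  have hγ : (Fintype.card γ : ℚ≥0) ≠ 0 := Nat.cast_ne_zero.2 Fintype.card_ne_zero
  rw [dens_eq_card_div_card, card_filter_injOn, Fintype.card_fun, ← card_add_card_compl s, pow_add]
  push_cast
  exact mul_div_mul_right _ _ (pow_ne_zero _ hγ)

lemma exists_coloring_injOn [Nonempty γ] {K : Finset (Finset α)} {k : ℕ}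
    (hK : (K : Set (Finset α)).Sized k) :
    ∃ c : α → γ, ((Fintype.card γ).descFactorial k : ℚ≥0) / Fintype.card γ ^ k * #K ≤
      #{A ∈ K | Set.InjOn c (A : Finset α)} := by
  classical
  -- `α` may be infinite, so only the points covered by `K` are coloured at random.
  let X := K.biUnion id
  let extendColoring (c : X → γ) : α → γ := extend Subtype.val c fun _ ↦ Classical.arbitrary γ
  suffices ∀ A ∈ K, dens {c : X → γ | Set.InjOn (extendColoring c) A} =
      ((Fintype.card γ).descFactorial k : ℚ≥0) / Fintype.card γ ^ k by
    obtain ⟨c, hc⟩ := exists_mul_card_le_card_filter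
      (fun (c : X → γ) (A : Finset α) ↦ Set.InjOn (extendColoring c) A) fun A hA ↦ (this A hA).ge
    exact ⟨extendColoring c, hc⟩
  intro A hA
  have hAX : ∀ a ∈ A, a ∈ X := subset_biUnion_of_mem id hA
  have hcard : #(A.subtype (· ∈ X)) = k := by rw [card_subtype, filter_true_of_mem hAX, hK hA]
  have himage : (A : Set α) = Subtype.val '' (A.subtype (· ∈ X) : Set X) := by
    rw [← Embedding.coe_subtype, ← coe_map, subtype_map_of_mem hAX]
  simp only [himage, extendColoring, injOn_extend_image_iff Subtype.val_injective,
    dens_filter_injOn, hcard]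

lemma card_filter_eq_one_of_injOn {s : Finset α} {c : α → γ} (hc : Set.InjOn c s)
    (hs : #s = Fintype.card γ) (i : γ) : #{a ∈ s | c a = i} = 1 := by
  have hi : i ∈ s.image c := by
    rw [eq_univ_of_card _ ((card_image_of_injOn hc).trans hs)]
    exact mem_univ i
  obtain ⟨a, ha, rfl⟩ := mem_image.1 hi
  exact card_eq_one.2 ⟨a, eq_singleton_iff_unique_mem.2
    ⟨mem_filter.2 ⟨ha, rfl⟩, fun b hb ↦ hc (mem_filter.1 hb).1 ha (mem_filter.1 hb).2⟩⟩

end Coloring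

theorem erdos_kleitman {α : Type*} [DecidableEq α] (X : Finset α) (k : ℕ)
    (hk : 1 ≤ k) (K : Finset (Finset α))
    (hK : ∀ A ∈ K, A ⊆ X ∧ A.card = k) :
    ∃ G ⊆ K, ∃ P : Fin k → Finset α,
      (∀ i j, i ≠ j → Disjoint (P i) (P j)) ∧
      X = Finset.univ.biUnion P ∧
      (∀ A ∈ G, ∀ i, (A ∩ P i).card = 1) ∧
      (Nat.factorial k : ℝ) / (k : ℝ) ^ k * (K.card : ℝ) ≤ (G.card : ℝ) := by
  have : NeZero k := ⟨Nat.one_le_iff_ne_zero.1 hk⟩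
  have hsized : (K : Set (Finset α)).Sized k := fun A hA ↦ (hK A hA).2
  obtain ⟨c, hc⟩ := exists_coloring_injOn (γ := Fin k) hsized
  refine ⟨{A ∈ K | Set.InjOn c (A : Finset α)}, filter_subset _ _, fun i ↦ {x ∈ X | c x = i},
    ?_, ?_, ?_, ?_⟩
  · intro i j hij
    exact Set.pairwiseDisjoint_filter c Set.univ X (Set.mem_univ i) (Set.mem_univ j) hij
  · exact (biUnion_filter_eq_of_maps_to fun x _ ↦ mem_univ (c x)).symm
  · intro A hA i
    obtain ⟨hAK, hinj⟩ := mem_filter.1 hA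
    obtain ⟨hAX, hAk⟩ := hK A hAK
    rw [inter_filter, inter_eq_left.2 hAX]
    exact card_filter_eq_one_of_injOn hinj (by rw [hAk, Fintype.card_fin]) i
  · rw [Fintype.card_fin, Nat.descFactorial_self] at hc
    simpa only [NNRat.cast_mul, NNRat.cast_div, NNRat.cast_pow, NNRat.cast_natCast] using
      (NNRat.cast_le (K := ℝ)).2 hc
end

section
/- Let k ≥ 1 and t ≥ 2 be integers. If F is a k-uniform set system with |F| > k!·(t−1)^k·(1 − ∑_{s=1}^{k−1} s/((s+1)!·(t−1)^s)), then F contains a sunflower with t petals, i.e. t distinct members F_1,…,F_t with F_i ∩ F_j = ⋂_{s=1}^t F_s for all i ≠ j. -/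
/-!
Let `F` consist of sets of size at most `k + 1` and have no sunflower with more than `b` petals.
Take a maximal pairwise disjoint subfamily `M`, with union `U`. It is a sunflower with empty kernel,
so `#M ≤ b`. Every member of `F` outside `M` meets `U`, while each `x ∈ U` lies in at most `d`
members of `F`, where `d` is the bound for sets of size at most `k`: the sets `A \ {x}` with
`x ∈ A ∈ F` have no larger sunflowers than `F`. Erdős and Rado count `#F ≤ #U * d`; the correction
factor comes from noticing that a member `A` of `M` is counted `#A` times rather than once, which
improves this to `#F + #U ≤ #M + #U * d`. As `#U ≤ b * (k + 1)`, the bound for `k + 1` becomes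
`b * ((k + 1) * (d - 1) + 1)`, and this recursion is solved by the closed form.
-/

open Finset

section Sunflower

variable {α : Type*} [SemilatticeInf α] {S T : Finset α} {K : α}

/-- `S` is a sunflower with kernel `K`: any two distinct petals in `S` meet exactly in `K`. The
kernel is a parameter since a sunflower with at most one petal does not determine it. -/
def IsSunflower (S : Finset α) (K : α) : Prop :=
  (S : Set α).Pairwise fun a b => a ⊓ b = K

theorem IsSunflower.subset (hT : IsSunflower T K) (hST : S ⊆ T) : IsSunflower S K :=
  hT.mono (coe_subset.2 hST)

theorem IsSunflower.inf'_eq (hSK : IsSunflower S K) (hcard : 1 < #S) (hS : S.Nonempty) :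
    S.inf' hS id = K := by
  apply le_antisymm
  · obtain ⟨a, ha, b, hb, hab⟩ := one_lt_card.1 hcard
    rw [← hSK ha hb hab]
    exact le_inf (inf'_le id ha) (inf'_le id hb)
  · refine le_inf' _ _ fun a ha => ?_
    obtain ⟨b, hb, hba⟩ := exists_mem_ne hcard a
    rw [← hSK ha hb hba.symm]
    exact inf_le_left

theorem isSunflower_bot_iff [OrderBot α] :
    IsSunflower S ⊥ ↔ (S : Set α).PairwiseDisjoint id := by
  simp only [IsSunflower, Set.PairwiseDisjoint, Set.Pairwise, Function.onFun, id, disjoint_iff]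

end Sunflower

theorem exists_maximal_pairwiseDisjoint_subset {α : Type*} [PartialOrder α] [OrderBot α]
    (F : Finset α) :
    ∃ M ⊆ F, (M : Set α).PairwiseDisjoint id ∧ ∀ a ∈ F, a ∉ M → ∃ b ∈ M, ¬Disjoint a b := by
  classical
  induction F using Finset.induction with
  | empty => exact ⟨∅, by simp⟩
  | insert a F _ ih =>
    obtain ⟨M, hMF, hM, hmax⟩ := ih
    by_cases ha : ∀ b ∈ M, Disjoint a b
    · refine ⟨insert a M, insert_subset_insert a hMF, ?_, ?_⟩
      · rw [coe_insert]
        exact hM.insert fun b hb _ => ha b hb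
      · intro c hc hcM
        obtain ⟨hca, hcM⟩ := not_or.1 (mt mem_insert.2 hcM)
        obtain ⟨b, hb, hcb⟩ := hmax c (mem_of_mem_insert_of_ne hc hca) hcM
        exact ⟨b, mem_insert_of_mem hb, hcb⟩
    · push Not at ha
      refine ⟨M, hMF.trans (subset_insert a F), hM, fun c hc hcM => ?_⟩
      obtain rfl | hc := mem_insert.1 hc
      exacts [ha, hmax c hc hcM]

section SetFamily

variable {α : Type*} [DecidableEq α] {F M S : Finset (Finset α)} {K : Finset α} {x : α}
  {b d k : ℕ}

theorem IsSunflower.image_insert (hS : IsSunflower S K) (x : α) :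
    IsSunflower (S.image (insert x)) (insert x K) := by
  rw [IsSunflower, coe_image]
  rintro _ ⟨A, hA, rfl⟩ _ ⟨B, hB, rfl⟩ hAB
  rw [inf_eq_inter, ← insert_inter_distrib, ← inf_eq_inter, hS hA hB (ne_of_apply_ne _ hAB)]

theorem card_image_insert_of_forall_notMem (hS : ∀ A ∈ S, x ∉ A) :
    #(S.image (insert x)) = #S := by
  refine card_image_of_injOn fun A hA B hB hAB => ?_
  rw [← erase_insert (hS A hA), ← erase_insert (hS B hB), hAB]

theorem card_filter_mem_le_card_memberSubfamily (F : Finset (Finset α)) (x : α) :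
    #{A ∈ F | x ∈ A} ≤ #(F.memberSubfamily x) := by
  rw [← image_insert_memberSubfamily]
  exact card_image_le

theorem card_le_of_mem_memberSubfamily (hF : ∀ A ∈ F, #A ≤ k + 1) :
    ∀ A ∈ F.memberSubfamily x, #A ≤ k := by
  intro A hA
  obtain ⟨hxA, hx⟩ := mem_memberSubfamily.1 hA
  simpa only [card_insert_of_notMem hx, Nat.add_le_add_iff_right] using hF _ hxA

theorem card_sunflower_le_of_subset_memberSubfamily
    (hF : ∀ S ⊆ F, ∀ K, IsSunflower S K → #S ≤ b) :
    ∀ S ⊆ F.memberSubfamily x, ∀ K, IsSunflower S K → #S ≤ b := by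
  intro S hS K hSK
  have hmem : ∀ A ∈ S, insert x A ∈ F ∧ x ∉ A := fun A hA => mem_memberSubfamily.1 (hS hA)
  rw [← card_image_insert_of_forall_notMem fun A hA => (hmem A hA).2]
  exact hF _ (image_subset_iff.2 fun A hA => (hmem A hA).1) _ (hSK.image_insert x)

theorem card_add_card_biUnion_le (hMF : M ⊆ F)
    (hmeet : ∀ A ∈ F, A ∉ M → ∃ B ∈ M, ¬Disjoint A B) (hd : ∀ x, #{A ∈ F | x ∈ A} ≤ d) :
    #F + #(M.biUnion id) ≤ #M + #(M.biUnion id) * d := by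
  set U := M.biUnion id
  have hout : #(F \ M) ≤ ∑ A ∈ F \ M, #(U ∩ A) := by
    refine card_eq_sum_ones (F \ M) ▸ sum_le_sum fun A hA => ?_
    obtain ⟨hAF, hAM⟩ := mem_sdiff.1 hA
    obtain ⟨B, hB, hAB⟩ := hmeet A hAF hAM
    obtain ⟨x, hxA, hxB⟩ := not_disjoint_iff.1 hAB
    exact card_pos.2 ⟨x, mem_inter.2 ⟨mem_biUnion.2 ⟨B, hB, hxB⟩, hxA⟩⟩
  have hin : #U ≤ ∑ A ∈ M, #(U ∩ A) := by
    refine card_biUnion_le.trans (sum_le_sum fun A hA => card_le_card ?_)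
    exact subset_inter (subset_biUnion_of_mem id hA) Subset.rfl
  calc #F + #U = #M + (#(F \ M) + #U) := by rw [← card_sdiff_add_card_eq_card hMF]; ring
    _ ≤ #M + (∑ A ∈ F \ M, #(U ∩ A) + ∑ A ∈ M, #(U ∩ A)) := by gcongr
    _ = #M + ∑ A ∈ F, #(U ∩ A) := by rw [sum_sdiff hMF]
    _ ≤ #M + #U * d := by gcongr; exact sum_card_inter_le fun x _ => hd x

theorem card_le_card_mul_of_maximal_pairwiseDisjoint (hMF : M ⊆ F)
    (hmeet : ∀ A ∈ F, A ∉ M → ∃ B ∈ M, ¬Disjoint A B) (hd : ∀ x, #{A ∈ F | x ∈ A} ≤ d)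
    (hk : ∀ A ∈ M, #A ≤ k) : #F ≤ #M * (k * (d - 1) + 1) := by
  have hcount := card_add_card_biUnion_le hMF hmeet hd
  have hU : #(M.biUnion id) ≤ #M * k := card_biUnion_le_card_mul M id k hk
  calc #F ≤ #M + #(M.biUnion id) * (d - 1) := by rw [Nat.mul_sub_one]; omega
    _ ≤ #M + #M * k * (d - 1) := by gcongr
    _ = #M * (k * (d - 1) + 1) := by ring

/-- The recursive form of the Erdős–Rado bound on the size of a family of sets of size at most `k`
whose sunflowers have at most `b` petals. For `1 ≤ b` all its values are positive, so that the
subtraction does not truncate. -/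
def sunflowerBound (b : ℕ) : ℕ → ℕ
  | 0 => 1
  | k + 1 => b * ((k + 1) * (sunflowerBound b k - 1) + 1)

theorem card_le_sunflowerBound (hk : ∀ A ∈ F, #A ≤ k)
    (hF : ∀ S ⊆ F, ∀ K, IsSunflower S K → #S ≤ b) : #F ≤ sunflowerBound b k := by
  induction k generalizing F with
  | zero =>
    refine card_le_one.2 fun A hA B hB => ?_
    rw [card_eq_zero.1 (Nat.le_zero.1 (hk A hA)), card_eq_zero.1 (Nat.le_zero.1 (hk B hB))]
  | succ k ih =>
    obtain ⟨M, hMF, hM, hmax⟩ := exists_maximal_pairwiseDisjoint_subset F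
    have hMb : #M ≤ b := hF M hMF ⊥ (isSunflower_bot_iff.2 hM)
    have hdegree (x : α) : #{A ∈ F | x ∈ A} ≤ sunflowerBound b k :=
      (card_filter_mem_le_card_memberSubfamily F x).trans <|
        ih (card_le_of_mem_memberSubfamily hk) (card_sunflower_le_of_subset_memberSubfamily hF)
    calc #F ≤ #M * ((k + 1) * (sunflowerBound b k - 1) + 1) :=
          card_le_card_mul_of_maximal_pairwiseDisjoint hMF hmax hdegree fun A hA => hk A (hMF hA)
      _ ≤ sunflowerBound b (k + 1) := Nat.mul_le_mul_right _ hMb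

end SetFamily

section ClosedForm

variable {b : ℕ}

theorem sunflowerBound_pos (hb : 0 < b) (k : ℕ) : 0 < sunflowerBound b k := by
  cases k with
  | zero => exact one_pos
  | succ k => exact Nat.mul_pos hb (Nat.succ_pos _)

theorem cast_sunflowerBound_succ (hb : 0 < b) (k : ℕ) :
    (sunflowerBound b (k + 1) : ℝ) = b * ((k + 1) * sunflowerBound b k - k) := by
  rw [sunflowerBound, Nat.cast_mul, Nat.cast_succ, Nat.cast_mul,
    Nat.cast_pred (sunflowerBound_pos hb k)]
  push_cast
  ring

-- The term `s = 0` of the sum vanishes, so that `range k` and `Icc 1 (k - 1)` give the same sum.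
theorem cast_sunflowerBound_eq_sum_range (hb : 0 < b) (k : ℕ) :
    (sunflowerBound b k : ℝ) =
      k.factorial * (b : ℝ) ^ k *
        (1 - ∑ s ∈ range k, (s : ℝ) / ((s + 1).factorial * (b : ℝ) ^ s)) := by
  induction k with
  | zero => simp [sunflowerBound]
  | succ k ih =>
    rw [cast_sunflowerBound_succ hb, ih, sum_range_succ, Nat.factorial_succ]
    push_cast
    field_simp
    ring

theorem cast_sunflowerBound (hb : 0 < b) (k : ℕ) :
    (sunflowerBound b k : ℝ) =
      k.factorial * (b : ℝ) ^ k *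
        (1 - ∑ s ∈ Icc 1 (k - 1), (s : ℝ) / ((s + 1).factorial * (b : ℝ) ^ s)) := by
  rw [cast_sunflowerBound_eq_sum_range hb]
  congr 2
  refine (sum_subset (fun s hs => ?_) fun s hs hs' => ?_).symm
  · simp only [mem_Icc, mem_range] at hs ⊢
    omega
  · obtain rfl : s = 0 := by simp only [mem_Icc, mem_range] at hs hs'; omega
    simp

end ClosedForm

theorem erdos_rado_sunflower_general {α : Type*} [DecidableEq α] (k t : ℕ) (ht : 2 ≤ t)
    (F : Finset (Finset α)) (hk : ∀ A ∈ F, A.card ≤ k)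
    (hcard : (Nat.factorial k : ℝ) * ((t : ℝ) - 1) ^ k *
        (1 - ∑ s ∈ Finset.Icc 1 (k - 1),
          (s : ℝ) / ((Nat.factorial (s + 1) : ℝ) * ((t : ℝ) - 1) ^ s))
      < (F.card : ℝ)) :
    ∃ S ⊆ F, S.card = t ∧ ∃ hS : S.Nonempty,
      ∀ A ∈ S, ∀ B ∈ S, A ≠ B → A ∩ B = S.inf' hS id := by
  have hbound : sunflowerBound (t - 1) k < #F := by
    rw [← Nat.cast_pred (by omega), ← cast_sunflowerBound (by omega)] at hcard
    exact_mod_cast hcard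
  obtain ⟨T, hTF, K, hT, htT⟩ : ∃ T ⊆ F, ∃ K, IsSunflower T K ∧ t - 1 < #T := by
    by_contra! hfree
    exact hbound.not_ge (card_le_sunflowerBound hk hfree)
  obtain ⟨S, hST, rfl⟩ := exists_subset_card_eq (Nat.le_of_pred_lt htT)
  have hS : S.Nonempty := card_pos.1 (by omega)
  have hSK : IsSunflower S K := hT.subset hST
  refine ⟨S, hST.trans hTF, rfl, hS, fun A hA B hB hAB => ?_⟩
  rw [hSK.inf'_eq ht hS]
  exact hSK hA hB hAB

theorem erdos_rado_sunflower {α : Type*} [DecidableEq α] (k t : ℕ)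
    (hk : 1 ≤ k) (ht : 2 ≤ t) (F : Finset (Finset α))
    (huniform : ∀ A ∈ F, A.card = k)
    (hcard : (Nat.factorial k : ℝ) * ((t : ℝ) - 1) ^ k *
        (1 - ∑ s ∈ Finset.Icc 1 (k - 1),
          (s : ℝ) / ((Nat.factorial (s + 1) : ℝ) * ((t : ℝ) - 1) ^ s))
      < (F.card : ℝ)) :
    ∃ S ⊆ F, S.card = t ∧ ∃ hS : S.Nonempty,
      ∀ A ∈ S, ∀ B ∈ S, A ≠ B → A ∩ B = S.inf' hS id :=
  erdos_rado_sunflower_general k t ht F (fun A hA => (huniform A hA).le) hcard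
end

section
/- Let k ≥ 1 be an integer and x ≥ 2 a real number. Then ∑_{j=0}^{⌊2k/3⌋} C(k, j)·x^j ≤ (⌈2k/3⌉ + 1)·(3/2^{2/3})^k·x^{⌈2k/3⌉}, where C(k, j) is the binomial coefficient. -/
/-!
This is the Chernoff argument for binomial sums. For `0 < b ≤ x` and `j ≤ c`, write
`x ^ j = b ^ j * (x / b) ^ j` and bound `(x / b) ^ j` by `(x / b) ^ c`; what remains is part of the
binomial expansion of `(b + 1) ^ k`, so the whole sum is at most `(b + 1) ^ k * (x / b) ^ c`.
If moreover `1 ≤ b` and `θ * k ≤ c`, then `(b + 1) ^ k / b ^ c ≤ ((b + 1) / b ^ θ) ^ k`. The base on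
the right is smallest at `b = θ / (1 - θ)`, which is `2` for `θ = 2 / 3`. Bounding the terms
together rather than one by one saves the factor `⌈2 * k / 3⌉ + 1`.
-/

open Finset

theorem sum_choose_mul_pow_le_add_one_pow {R : Type*} [CommSemiring R] [PartialOrder R]
    [IsOrderedRing R] (k : ℕ) (s : Finset ℕ) {b : R} (hb : 0 ≤ b) :
    ∑ j ∈ s, (k.choose j : R) * b ^ j ≤ (b + 1) ^ k := by
  have term_eq_zero : ∀ j ∈ s ∪ range (k + 1), j ∉ range (k + 1) →
      (k.choose j : R) * b ^ j = 0 := fun j _ hj ↦ by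
    rw [Nat.choose_eq_zero_of_lt (by simpa using hj), Nat.cast_zero, zero_mul]
  calc ∑ j ∈ s, (k.choose j : R) * b ^ j
      ≤ ∑ j ∈ s ∪ range (k + 1), (k.choose j : R) * b ^ j :=
        sum_le_sum_of_subset_of_nonneg subset_union_left fun _ _ _ ↦ by positivity
    _ = ∑ j ∈ range (k + 1), (k.choose j : R) * b ^ j :=
        (sum_subset subset_union_right term_eq_zero).symm
    _ = (b + 1) ^ k := by simp only [add_pow, one_pow, mul_one, mul_comm]

theorem sum_choose_mul_pow_le_add_one_pow_mul_div_pow {K : Type*} [Field K] [LinearOrder K]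
    [IsStrictOrderedRing K] (k : ℕ) {c : ℕ} {s : Finset ℕ} {b x : K} (hb : 0 < b) (hbx : b ≤ x)
    (hs : ∀ j ∈ s, j ≤ c) :
    ∑ j ∈ s, (k.choose j : K) * x ^ j ≤ (b + 1) ^ k * (x / b) ^ c := by
  have one_le_ratio : 1 ≤ x / b := (one_le_div₀ hb).2 hbx
  calc ∑ j ∈ s, (k.choose j : K) * x ^ j
      = ∑ j ∈ s, (k.choose j : K) * b ^ j * (x / b) ^ j :=
        sum_congr rfl fun j _ ↦ by rw [mul_assoc, ← mul_pow, mul_div_cancel₀ x hb.ne']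
    _ ≤ ∑ j ∈ s, (k.choose j : K) * b ^ j * (x / b) ^ c := by
        gcongr with j hj
        exact hs j hj
    _ = (∑ j ∈ s, (k.choose j : K) * b ^ j) * (x / b) ^ c := (sum_mul ..).symm
    _ ≤ (b + 1) ^ k * (x / b) ^ c := by
        gcongr
        exact sum_choose_mul_pow_le_add_one_pow k s hb.le

theorem sum_choose_mul_pow_le_div_rpow_pow_mul_pow {k c : ℕ} {s : Finset ℕ} {b x θ : ℝ}
    (hb : 1 ≤ b) (hbx : b ≤ x) (hθ : θ * k ≤ c) (hs : ∀ j ∈ s, j ≤ c) :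
    ∑ j ∈ s, (k.choose j : ℝ) * x ^ j ≤ ((b + 1) / b ^ θ) ^ k * x ^ c := by
  have b_pos : 0 < b := one_pos.trans_le hb
  have x_pos : 0 < x := b_pos.trans_le hbx
  have rpow_pow_le : (b ^ θ) ^ k ≤ b ^ c := by
    rw [← Real.rpow_mul_natCast b_pos.le, ← Real.rpow_natCast b c]
    exact Real.rpow_le_rpow_of_exponent_le hb hθ
  calc ∑ j ∈ s, (k.choose j : ℝ) * x ^ j
      ≤ (b + 1) ^ k * (x / b) ^ c :=
        sum_choose_mul_pow_le_add_one_pow_mul_div_pow k b_pos hbx hs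
    _ = (b + 1) ^ k / b ^ c * x ^ c := by rw [div_pow, mul_div_left_comm, mul_comm]
    _ ≤ (b + 1) ^ k / (b ^ θ) ^ k * x ^ c := by gcongr
    _ = ((b + 1) / b ^ θ) ^ k * x ^ c := by rw [div_pow]

theorem binomial_sum_le_closed_form_general (k : ℕ) {x : ℝ} (hx : 2 ≤ x) :
    ∑ j ∈ range (2 * k / 3 + 1), (k.choose j : ℝ) * x ^ j ≤
      (3 / 2 ^ ((2 : ℝ) / 3)) ^ k * x ^ ⌈(2 * k : ℚ) / 3⌉₊ := by
  have le_ceil : 2 * k ≤ 3 * ⌈(2 * k : ℚ) / 3⌉₊ := by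
    have := (div_le_iff₀' three_pos).1 (Nat.le_ceil ((2 * k : ℚ) / 3))
    exact_mod_cast this
  have exponent_le : (2 : ℝ) / 3 * k ≤ ⌈(2 * k : ℚ) / 3⌉₊ := by
    rw [div_mul_eq_mul_div, div_le_iff₀' three_pos]
    exact_mod_cast le_ceil
  have index_le : ∀ j ∈ range (2 * k / 3 + 1), j ≤ ⌈(2 * k : ℚ) / 3⌉₊ := fun j hj ↦ by
    rw [mem_range] at hj
    lia
  simpa only [two_add_one_eq_three] using
    sum_choose_mul_pow_le_div_rpow_pow_mul_pow one_le_two hx exponent_le index_le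

theorem binomial_sum_le_closed_form (k : ℕ) (hk : 1 ≤ k) (x : ℝ) (hx : 2 ≤ x) :
    ∑ j ∈ Finset.range (2 * k / 3 + 1), (k.choose j : ℝ) * x ^ j ≤
      ((⌈(2 * k : ℚ) / 3⌉₊ : ℝ) + 1) * (3 / 2 ^ ((2 : ℝ) / 3)) ^ k *
        x ^ ⌈(2 * k : ℚ) / 3⌉₊ := by
  rw [mul_assoc]
  exact (binomial_sum_le_closed_form_general k hx).trans <|
    le_mul_of_one_le_left (by positivity) (le_add_of_nonneg_left (Nat.cast_nonneg _))
end
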